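/- arXiv:2110.03911 — 2 statements merged into one kernel-verified Lean document; each statement's English description precedes it below -/
import Mathlib

section
/- (Existence) Suppose: (i) 𝒢: C([a,b],ℝ) → ℝ is continuous and |𝒢(x)| ≤ κ·‖x‖ for all x ∈ C([a,b],ℝ) with κ ∈ (0,1); (ii) f: (a,b)×ℝ → ℝ satisfies f(·,u) measurable for each u ∈ ℝ, |f(t,x)| ≤ κ₁(t)·Ψ(|x|) and |f(t,x)−f(t,y)| ≤ κ₂(t)·|Φ(x,y)| for all t ∈ (a,b) and x, y ∈ ℝ, where κ₁, κ₂: (a,b) → [0,∞) are measurable with ψ'·κ₁ and ψ'·κ₂ in L¹(a,b), Ψ: [0,∞) → [0,∞) is nondecreasing, and Φ: ℝ×ℝ → ℝ is continuous with Φ(x,y) → 0 as |x−y| → 0 (uniformly: for every ε > 0 there is δ > 0 such that |x−y| < δ implies |Φ(x,y)| < ε); (iii) there exists M > 0 such that (1−κ)·M > Ψ(M)·G_max·∫_a^b ψ'(τ)κ₁(τ) dτ, where G_max = L^{α+β−1}/Γ(α+β). Then the problem has at least one mild solution x with ‖x‖ ≤ M. -/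
open MeasureTheory Set

/-- The Green function of the sequential fractional boundary value problem. -/
noncomputable def G (a b α β : ℝ) (ψ : ℝ → ℝ) (τ t : ℝ) : ℝ :=
  if τ ≤ t then
    (ψ t - ψ a) ^ β * (ψ b - ψ τ) ^ (α + β - 1) /
        (Real.Gamma (α + β) * (ψ b - ψ a) ^ β) -
      (ψ t - ψ τ) ^ (α + β - 1) / Real.Gamma (α + β)
  else
    (ψ t - ψ a) ^ β * (ψ b - ψ τ) ^ (α + β - 1) /
      (Real.Gamma (α + β) * (ψ b - ψ a) ^ β)

/-- The supremum norm of a function over the interval `[a,b]`. -/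
noncomputable def supNorm (a b : ℝ) (x : ℝ → ℝ) : ℝ :=
  ⨆ t : Set.Icc a b, |x ↑t|

/-!
No Schauder fixed point theorem is needed. The Green function splits as
`G(τ, t) = p(t) k(b, τ) - k(t, τ)` with `k` a Volterra kernel, so the equation reads
`x = c • p - V x` with `V` a compact, strictly causal operator and `c = 𝒢 x + (V x)(b)`: the only
non-causal datum is the scalar `c`. If `V` is fed with the solution delayed by `δ > 0`, then for
each `c` the equation is solved by finitely many iterations, and the solution depends continuously
on `c`; the intermediate value theorem then finds `c` (a shooting argument), and compactness of `V`
gives a limit as `δ → 0`. The nonlinearity is first truncated to `|x| ≤ M`, and condition (iii)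
shows that the solution stays in that range.
-/

open Filter Topology ContinuousMap

section StrictlyCausal

/-- Strictly causal (Volterra) operators: the value of `T x` at `t` depends only on the values of
`x` at times `s < t`. -/
def IsStrictlyCausal {X E F : Type*} [TopologicalSpace X] [Preorder X] [TopologicalSpace E]
    [TopologicalSpace F] (T : C(X, E) → C(X, F)) : Prop :=
  ∀ ⦃x y : C(X, E)⦄ ⦃t : X⦄, EqOn x y (Iio t) → T x t = T y t

variable {a b : ℝ} [Fact (a ≤ b)]

/-- The time shift `t ↦ t - δ` of `[a, b]`, stopped at the endpoints of the interval; precomposing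
with it delays a function by `δ`. -/
noncomputable def delay (δ : ℝ) : C(Icc a b, Icc a b) :=
  projIccCM.comp ⟨fun t => (t : ℝ) - δ, by fun_prop⟩

lemma continuous_delay : Continuous (delay : ℝ → C(Icc a b, Icc a b)) :=
  continuous_of_continuous_uncurry _ <|
    projIccCM.continuous.comp (by fun_prop : Continuous fun p : ℝ × Icc a b => (p.2 : ℝ) - p.1)

lemma delay_zero : delay 0 = ContinuousMap.id (Icc a b) := by
  ext t
  simp [delay, projIccCM]

lemma coe_delay_le {δ r : ℝ} {t : Icc a b} (hr : a ≤ r) (ht : t ≤ r + δ) :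
    (delay δ t : ℝ) ≤ r :=
  max_le hr ((min_le_right _ _).trans (sub_le_iff_le_add.2 ht))

variable {E : Type*} [TopologicalSpace E]

lemma IsStrictlyCausal.iterate_delay_eqOn {T : C(Icc a b, E) → C(Icc a b, E)}
    (hT : IsStrictlyCausal T) {δ : ℝ} (hδ : 0 < δ) (x y : C(Icc a b, E)) (m : ℕ) :
    EqOn ((fun z => T (z.comp (delay δ)))^[m + 1] x) ((fun z => T (z.comp (delay δ)))^[m + 1] y)
      {t | t ≤ a + m * δ} := by
  induction m with
  | zero =>
    intro t ht
    have hta : (t : ℝ) ≤ a := by simpa using ht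
    exact hT fun s hs => absurd s.2.1 (not_le.2 (lt_of_lt_of_le hs hta))
  | succ m ih =>
    intro t ht
    simp only [Function.iterate_succ_apply' _ (m + 1)]
    refine hT fun s hs => ih (coe_delay_le ?_ ?_)
    · exact le_add_of_nonneg_right (by positivity)
    · have hst : (s : ℝ) < t := hs
      simp only [mem_ofPred_eq, Nat.cast_add_one] at ht
      linarith

lemma exists_continuous_delayed_solution {Λ : Type*} [TopologicalSpace Λ] [Nonempty E]
    {T : Λ → C(Icc a b, E) → C(Icc a b, E)} (hT : Continuous (Function.uncurry T))
    (hcausal : ∀ c, IsStrictlyCausal (T c)) {δ : ℝ} (hδ : 0 < δ) :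
    ∃ X : Λ → C(Icc a b, E), Continuous X ∧ ∀ c, T c ((X c).comp (delay δ)) = X c := by
  obtain ⟨m, hm⟩ := exists_nat_ge ((b - a) / δ)
  rw [div_le_iff₀ hδ] at hm
  let D (c : Λ) (z : C(Icc a b, E)) := T c (z.comp (delay δ))
  let x₀ : C(Icc a b, E) := .const _ (Classical.arbitrary E)
  refine ⟨fun c => (D c)^[m + 1] x₀, ?_, fun c => ?_⟩
  · induction m + 1 with
    | zero => exact continuous_const
    | succ n ih =>
      simp only [Function.iterate_succ_apply']
      exact hT.comp (continuous_id.prodMk ((continuous_precomp _).comp ih))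
  · change D c ((D c)^[m + 1] x₀) = _
    rw [← Function.iterate_succ_apply' (D c), Function.iterate_succ_apply (D c)]
    ext t
    exact (hcausal c).iterate_delay_eqOn hδ _ _ m (show (t : ℝ) ≤ _ by linarith [t.2.2])

end StrictlyCausal

section Shooting

variable {a b : ℝ} [Fact (a ≤ b)]

lemma exists_delayed_shooting_solution {E : Type*} [TopologicalSpace E] [Nonempty E]
    {T : ℝ → C(Icc a b, E) → C(Icc a b, E)} (hT : Continuous (Function.uncurry T))
    (hcausal : ∀ c, IsStrictlyCausal (T c)) {l : C(Icc a b, E) → ℝ} (hl : Continuous l)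
    {r R : ℝ} (hrR : r ≤ R) (hlT : ∀ c ∈ Icc r R, ∀ x, l (T c x) ∈ Icc r R)
    {δ : ℝ} (hδ : 0 < δ) :
    ∃ x, l x ∈ Icc r R ∧ T (l x) (x.comp (delay δ)) = x := by
  obtain ⟨X, hX, hXT⟩ := exists_continuous_delayed_solution hT hcausal hδ
  have hmaps : MapsTo (fun c => l (X c)) (Icc r R) (Icc r R) := fun c hc => by
    simpa only [hXT] using hlT c hc ((X c).comp (delay δ))
  obtain ⟨c, hc, hfix⟩ := exists_mem_Icc_isFixedPt_of_mapsTo (hl.comp hX).continuousOn hrR hmaps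
  have hlX : l (X c) = c := hfix
  exact ⟨X c, by rwa [hlX], by rw [hlX, hXT]⟩

-- Tonelli's scheme: the solutions delayed by `δ` lie in `s`, and any cluster point as `δ → 0`
-- solves the undelayed equation.
theorem exists_shooting_solution {E : Type*} [MetricSpace E] [Nonempty E]
    {T : ℝ → C(Icc a b, E) → C(Icc a b, E)} (hT : Continuous (Function.uncurry T))
    (hcausal : ∀ c, IsStrictlyCausal (T c)) {l : C(Icc a b, E) → ℝ} (hl : Continuous l)
    {r R : ℝ} (hrR : r ≤ R) (hlT : ∀ c ∈ Icc r R, ∀ x, l (T c x) ∈ Icc r R)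
    {s : Set C(Icc a b, E)} (hs : IsCompact s) (hTs : ∀ c ∈ Icc r R, ∀ x, T c x ∈ s) :
    ∃ x, T (l x) x = x := by
  choose x hlx hx using fun n : ℕ =>
    exists_delayed_shooting_solution hT hcausal hl hrR hlT (Nat.one_div_pos_of_nat (n := n))
  have hxs (n : ℕ) : x n ∈ s := hx n ▸ hTs _ (hlx n) _
  obtain ⟨y, -, φ, hφ, hxy⟩ := hs.tendsto_subseq hxs
  have hdelay : Tendsto (fun n => delay (1 / ((φ n : ℝ) + 1))) atTop
      (𝓝 (ContinuousMap.id (Icc a b))) := by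
    rw [← delay_zero]
    exact (continuous_delay.tendsto 0).comp
      (tendsto_one_div_add_atTop_nhds_zero_nat.comp hφ.tendsto_atTop)
  have hxy_delay := hxy.compCM hdelay
  rw [ContinuousMap.comp_id] at hxy_delay
  have hTx : Tendsto (fun n => T (l (x (φ n))) ((x (φ n)).comp (delay (1 / ((φ n : ℝ) + 1)))))
      atTop (𝓝 (T (l y) y)) :=
    (hT.tendsto (l y, y)).comp
      (((hl.tendsto y).comp hxy).prodMk_nhds hxy_delay)
  exact ⟨y, tendsto_nhds_unique (hTx.congr fun n => hx (φ n)) hxy⟩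

theorem exists_eq_smul_sub {E : Type*} [NormedAddCommGroup E] [NormedSpace ℝ E]
    {V : C(Icc a b, E) → C(Icc a b, E)} (hV : Continuous V) (hcausal : IsStrictlyCausal V)
    (hcompact : IsCompact (closure (range V))) (p : C(Icc a b, E))
    {l : C(Icc a b, E) → ℝ} (hl : Continuous l) {κ B : ℝ} (hκ : 0 ≤ κ) (hκp : κ * ‖p‖ < 1)
    (hlB : ∀ x, |l x| ≤ κ * ‖x‖ + B) :
    ∃ x, x = l x • p - V x := by
  obtain ⟨A, hA⟩ := hcompact.isBounded.exists_norm_le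
  have hVA (x) : ‖V x‖ ≤ A := hA _ (subset_closure (mem_range_self x))
  have hA0 : 0 ≤ A := (norm_nonneg _).trans (hVA 0)
  have hB0 : 0 ≤ B := by simpa using (abs_nonneg _).trans (hlB 0)
  set R := (κ * A + B) / (1 - κ * ‖p‖) with hR
  have hRfix : κ * (R * ‖p‖ + A) + B = R := by
    have : 1 - κ * ‖p‖ ≠ 0 := by linarith
    rw [hR]; field_simp; ring
  have hR0 : 0 ≤ R := div_nonneg (by positivity) (by linarith)
  have hbound (c) (hc : c ∈ Icc (-R) R) (x) : ‖c • p - V x‖ ≤ R * ‖p‖ + A := by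
    refine (norm_sub_le _ _).trans (add_le_add ?_ (hVA x))
    rw [norm_smul]
    exact mul_le_mul_of_nonneg_right (abs_le.2 hc) (norm_nonneg p)
  obtain ⟨x, hx⟩ := exists_shooting_solution (T := fun c x => c • p - V x)
    (s := (fun q : ℝ × C(Icc a b, E) => q.1 • p - q.2) '' (Icc (-R) R ×ˢ closure (range V)))
    (by fun_prop) (fun c x y t hxy => by simp [hcausal hxy]) hl
    (neg_le_self hR0)
    (fun c hc x => abs_le.1 <| (hlB _).trans <|
      (by gcongr; exact hbound c hc x : _ ≤ κ * (R * ‖p‖ + A) + B).trans_eq hRfix)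
    ((isCompact_Icc.prod hcompact).image (by fun_prop))
    (fun c hc x => ⟨(c, V x), ⟨hc, subset_closure (mem_range_self x)⟩, rfl⟩)
  exact ⟨x, hx.symm⟩

end Shooting

section ArzelaAscoli

lemma isCompact_closure_of_equicontinuous {X F : Type*} [TopologicalSpace X] [CompactSpace X]
    [MetricSpace F] {A : Set C(X, F)} {s : Set F} (hs : IsCompact s)
    (hAs : ∀ f ∈ A, ∀ x, f x ∈ s) (hA : Equicontinuous ((↑) : A → X → F)) :
    IsCompact (closure A) := by
  let e := (isometryEquivBoundedOfCompact X F).toHomeomorph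
  rw [← e.isCompact_image, e.image_closure]
  refine BoundedContinuousFunction.arzela_ascoli s hs _ ?_ ?_
  · rintro _ x ⟨f, hf, rfl⟩
    exact hAs f hf x
  · have hpreimage (g : e '' A) : ∃ f : A, e f = g := by
      obtain ⟨_, f, hf, rfl⟩ := g
      exact ⟨⟨f, hf⟩, rfl⟩
    choose u hu using hpreimage
    convert hA.comp u using 1
    ext g x
    exact (DFunLike.congr_fun (hu g) x).symm

end ArzelaAscoli

section IntegralSMul

variable {Y F : Type*} [MeasurableSpace Y] {μ : Measure Y} [TopologicalSpace Y] [CompactSpace Y]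
  [NormedAddCommGroup F] [NormedSpace ℝ F]

lemma norm_integral_continuousMap_smul_le {g : Y → F} (hg : Integrable g μ) (k : C(Y, ℝ)) :
    ‖∫ τ, k τ • g τ ∂μ‖ ≤ ‖k‖ * ∫ τ, ‖g τ‖ ∂μ := by
  rw [← integral_const_mul]
  refine norm_integral_le_of_norm_le (hg.norm.const_mul _) (.of_forall fun τ => ?_)
  rw [norm_smul]
  gcongr
  exact k.norm_coe_le_norm τ

variable [OpensMeasurableSpace Y]

lemma integrable_continuousMap_smul {g : Y → F} (hg : Integrable g μ) (k : C(Y, ℝ)) :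
    Integrable (fun τ => k τ • g τ) μ :=
  hg.bdd_smul ‖k‖ k.continuous.stronglyMeasurable.aestronglyMeasurable
    (.of_forall k.norm_coe_le_norm)

lemma norm_integral_smul_sub_le {g : Y → F} (hg : Integrable g μ) (k k' : C(Y, ℝ)) :
    ‖∫ τ, k τ • g τ ∂μ - ∫ τ, k' τ • g τ ∂μ‖ ≤ ‖k - k'‖ * ∫ τ, ‖g τ‖ ∂μ := by
  rw [← integral_sub (integrable_continuousMap_smul hg k) (integrable_continuousMap_smul hg k')]
  simpa only [ContinuousMap.sub_apply, sub_smul] using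
    norm_integral_continuousMap_smul_le hg (k - k')

lemma continuous_integral_smul {g : Y → F} (hg : Integrable g μ) :
    Continuous fun k : C(Y, ℝ) => ∫ τ, k τ • g τ ∂μ :=
  LipschitzWith.continuous (K := (∫ τ, ‖g τ‖ ∂μ).toNNReal) <| .of_dist_le' fun k k' => by
    simpa only [dist_eq_norm, mul_comm] using norm_integral_smul_sub_le hg k k'

end IntegralSMul

section Hammerstein

variable {Y E F : Type*} [MeasurableSpace Y] {μ : Measure Y}

lemma aestronglyMeasurable_superposition [TopologicalSpace E] [NormedAddCommGroup F]
    {f : Y → E → F} (hf : ∀ u, AEStronglyMeasurable (fun τ => f τ u) μ)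
    (hf_cont : ∀ᵐ τ ∂μ, Continuous (f τ)) {x : Y → E} (hx : StronglyMeasurable x) :
    AEStronglyMeasurable (fun τ => f τ (x τ)) μ := by
  refine aestronglyMeasurable_of_tendsto_ae atTop (f := fun n τ => f τ (hx.approx n τ))
    (fun n => ?_) ?_
  · have hsum : (fun τ => f τ (hx.approx n τ)) = fun τ =>
        ∑ u ∈ (hx.approx n).range, (hx.approx n ⁻¹' {u}).indicator (fun τ => f τ u) τ := by
      ext τ
      exact ((Finset.sum_eq_single_of_mem _ ((hx.approx n).mem_range_self τ)
        fun u _ hu => indicator_of_notMem (fun hτ => hu (Eq.symm hτ)) _).trans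
        (indicator_of_mem rfl _)).symm
    rw [hsum]
    exact Finset.aestronglyMeasurable_fun_sum _ fun u _ =>
      (hf u).indicator ((hx.approx n).measurableSet_fiber u)
  · filter_upwards [hf_cont] with τ hτ
    exact (hτ.tendsto _).comp (hx.tendsto_approx τ)

/-- Carathéodory integrands `f : Y → E → F` that are dominated, uniformly in the second variable,
by the integrable function `h`; these are the integrands for which the superposition operator
`x ↦ (τ ↦ f τ (x τ))` is continuous from `C(Y, E)` to `L¹`. -/
structure IsDominatedCaratheodory [TopologicalSpace E] [NormedAddCommGroup F]
    (f : Y → E → F) (h : Y → ℝ) (μ : Measure Y) : Prop where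
  aestronglyMeasurable (u : E) : AEStronglyMeasurable (fun τ => f τ u) μ
  continuous : ∀ᵐ τ ∂μ, Continuous (f τ)
  norm_le : ∀ᵐ τ ∂μ, ∀ u, ‖f τ u‖ ≤ h τ
  integrable : Integrable h μ

variable [TopologicalSpace Y] [OpensMeasurableSpace Y] [MetricSpace E]
  [SecondCountableTopologyEither Y E] [NormedAddCommGroup F] {f : Y → E → F} {h : Y → ℝ}

namespace IsDominatedCaratheodory

lemma integrable_superposition (hf : IsDominatedCaratheodory f h μ) (x : C(Y, E)) :
    Integrable (fun τ => f τ (x τ)) μ :=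
  hf.integrable.mono' (aestronglyMeasurable_superposition hf.aestronglyMeasurable hf.continuous
    x.continuous.stronglyMeasurable) (hf.norm_le.mono fun _ hτ => hτ _)

lemma integral_norm_superposition_le (hf : IsDominatedCaratheodory f h μ) (x : C(Y, E)) :
    ∫ τ, ‖f τ (x τ)‖ ∂μ ≤ ∫ τ, h τ ∂μ :=
  integral_mono_ae (hf.integrable_superposition x).norm hf.integrable
    (hf.norm_le.mono fun _ hτ => hτ _)

variable [CompactSpace Y]

lemma tendsto_integral_norm_sub (hf : IsDominatedCaratheodory f h μ) (x : C(Y, E)) :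
    Tendsto (fun y : C(Y, E) => ∫ τ, ‖f τ (y τ) - f τ (x τ)‖ ∂μ) (𝓝 x) (𝓝 0) := by
  rw [← integral_zero Y ℝ (μ := μ)]
  refine tendsto_integral_filter_of_dominated_convergence (fun τ => h τ + h τ)
    (.of_forall fun y => ?_) (.of_forall fun y => ?_) (hf.integrable.add hf.integrable) ?_
  · exact ((hf.integrable_superposition y).sub (hf.integrable_superposition x)).norm.1
  · filter_upwards [hf.norm_le] with τ hτ
    rw [norm_norm]
    exact (norm_sub_le _ _).trans (add_le_add (hτ _) (hτ _))
  · filter_upwards [hf.continuous] with τ hτ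
    have hcont : Continuous fun y : C(Y, E) => ‖f τ (y τ) - f τ (x τ)‖ := by fun_prop
    simpa using hcont.tendsto x

end IsDominatedCaratheodory

variable [CompactSpace Y] [NormedSpace ℝ F] {X : Type*} [TopologicalSpace X]

/-- The Hammerstein operator `x ↦ (t ↦ ∫ k(t, τ) f(τ, x(τ)) dμ(τ))`; the kernel is curried, so that
its continuity in `t` is uniform in `τ`. -/
noncomputable def hammerstein (k : C(X, C(Y, ℝ))) (hf : IsDominatedCaratheodory f h μ)
    (x : C(Y, E)) : C(X, F) where
  toFun t := ∫ τ, k t τ • f τ (x τ) ∂μ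
  continuous_toFun := (continuous_integral_smul (hf.integrable_superposition x)).comp k.continuous

lemma norm_hammerstein_apply_le (k : C(X, C(Y, ℝ))) (hf : IsDominatedCaratheodory f h μ)
    (x : C(Y, E)) (t : X) : ‖hammerstein k hf x t‖ ≤ ‖k t‖ * ∫ τ, h τ ∂μ :=
  (norm_integral_continuousMap_smul_le (hf.integrable_superposition x) (k t)).trans <|
    mul_le_mul_of_nonneg_left (hf.integral_norm_superposition_le x) (norm_nonneg _)

lemma dist_hammerstein_apply_le (k : C(X, C(Y, ℝ))) (hf : IsDominatedCaratheodory f h μ)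
    (x : C(Y, E)) (s t : X) :
    dist (hammerstein k hf x s) (hammerstein k hf x t) ≤ dist (k s) (k t) * ∫ τ, h τ ∂μ := by
  rw [dist_eq_norm, dist_eq_norm]
  exact (norm_integral_smul_sub_le (hf.integrable_superposition x) (k s) (k t)).trans <|
    mul_le_mul_of_nonneg_left (hf.integral_norm_superposition_le x) (norm_nonneg _)

variable [CompactSpace X]

lemma continuous_hammerstein (k : C(X, C(Y, ℝ))) (hf : IsDominatedCaratheodory f h μ) :
    Continuous (hammerstein k hf) := by
  refine continuous_iff_continuousAt.2 fun x => tendsto_iff_dist_tendsto_zero.2 ?_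
  refine squeeze_zero (fun y => dist_nonneg) (fun y => ?_)
    (by simpa using (hf.tendsto_integral_norm_sub x).const_mul ‖k‖)
  have hint := (hf.integrable_superposition y).sub (hf.integrable_superposition x)
  refine (dist_le (by positivity)).2 fun t => ?_
  calc dist (hammerstein k hf y t) (hammerstein k hf x t)
      = ‖∫ τ, k t τ • (f τ (y τ) - f τ (x τ)) ∂μ‖ := by
        simp only [smul_sub, dist_eq_norm]
        rw [integral_sub (integrable_continuousMap_smul (hf.integrable_superposition y) (k t))
          (integrable_continuousMap_smul (hf.integrable_superposition x) (k t))]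
        rfl
    _ ≤ ‖k t‖ * ∫ τ, ‖f τ (y τ) - f τ (x τ)‖ ∂μ :=
        norm_integral_continuousMap_smul_le hint (k t)
    _ ≤ ‖k‖ * ∫ τ, ‖f τ (y τ) - f τ (x τ)‖ ∂μ := by
        gcongr
        exact k.norm_coe_le_norm t

lemma isCompact_closure_range_hammerstein [ProperSpace F] (k : C(X, C(Y, ℝ)))
    (hf : IsDominatedCaratheodory f h μ) : IsCompact (closure (range (hammerstein k hf))) := by
  refine isCompact_closure_of_equicontinuous
    (isCompact_closedBall (0 : F) (‖k‖ * ∫ τ, h τ ∂μ)) ?_ fun t => ?_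
  · rintro _ ⟨x, rfl⟩ t
    rw [mem_closedBall_zero_iff]
    have hint : 0 ≤ ∫ τ, h τ ∂μ := by
      refine le_trans ?_ (hf.integral_norm_superposition_le x)
      positivity
    exact (norm_hammerstein_apply_le k hf x t).trans
      (mul_le_mul_of_nonneg_right (k.norm_coe_le_norm t) hint)
  · refine Metric.equicontinuousAt_of_continuity_modulus
      (fun s => dist (k t) (k s) * ∫ τ, h τ ∂μ) ?_ _ (.of_forall fun s => ?_)
    · have hcont : Continuous fun s => dist (k t) (k s) * ∫ τ, h τ ∂μ := by fun_prop
      simpa using hcont.tendsto t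
    · rintro ⟨_, x, rfl⟩
      exact dist_hammerstein_apply_le k hf x t s

lemma isStrictlyCausal_hammerstein [Preorder Y] {k : C(Y, C(Y, ℝ))}
    (hk : ∀ t τ, ¬ τ < t → k t τ = 0) (hf : IsDominatedCaratheodory f h μ) :
    IsStrictlyCausal (hammerstein k hf) := fun x y t hxy =>
  integral_congr_ae <| .of_forall fun τ => by
    by_cases hτ : τ < t
    · simp only [hxy hτ]
    · simp only [hk t τ hτ, zero_smul]

end Hammerstein

section Green

/-- The kernel of the `ψ`-Riemann–Liouville integral of order `γ`, without the factor `ψ'`. The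
truncation by `0` makes it vanish for `ψ t ≤ ψ τ`, so integrals over `τ ≤ t` can be taken over the
whole interval. -/
noncomputable def rlKernel {X : Type*} (ψ : X → ℝ) (γ : ℝ) (t τ : X) : ℝ :=
  max (ψ t - ψ τ) 0 ^ (γ - 1) / Real.Gamma γ

section

variable {X : Type*} {ψ : X → ℝ} {γ : ℝ} {t τ : X}

lemma rlKernel_of_le (hγ : 1 < γ) (h : ψ t ≤ ψ τ) : rlKernel ψ γ t τ = 0 := by
  rw [rlKernel, max_eq_right (sub_nonpos.2 h), Real.zero_rpow (sub_pos.2 hγ).ne', zero_div]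

lemma rlKernel_of_ge (h : ψ τ ≤ ψ t) :
    rlKernel ψ γ t τ = (ψ t - ψ τ) ^ (γ - 1) / Real.Gamma γ := by
  rw [rlKernel, max_eq_left (sub_nonneg.2 h)]

lemma rlKernel_nonneg (hγ : 0 < γ) : 0 ≤ rlKernel ψ γ t τ :=
  div_nonneg (Real.rpow_nonneg (le_max_right _ _) _) (Real.Gamma_pos_of_pos hγ).le

lemma rlKernel_le (hγ : 1 ≤ γ) {L : ℝ} (hL : 0 ≤ L) (h : ψ t - ψ τ ≤ L) :
    rlKernel ψ γ t τ ≤ L ^ (γ - 1) / Real.Gamma γ := by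
  refine div_le_div_of_nonneg_right ?_ (Real.Gamma_pos_of_pos (zero_lt_one.trans_le hγ)).le
  exact Real.rpow_le_rpow (le_max_right _ _) (max_le h hL) (sub_nonneg.2 hγ)

lemma continuous_rlKernel [TopologicalSpace X] (hψ : Continuous ψ) (hγ : 1 ≤ γ) :
    Continuous fun q : X × X => rlKernel ψ γ q.1 q.2 := by
  have hbase : Continuous fun q : X × X => max (ψ q.1 - ψ q.2) 0 := by fun_prop
  exact (hbase.rpow_const fun _ => .inr (sub_nonneg.2 hγ)).div_const _

end

variable {a b α β : ℝ} {ψ : ℝ → ℝ} {τ t : ℝ}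

lemma G_eq_mul_rlKernel_sub (hψ : MonotoneOn ψ (Icc a b)) (hαβ : 1 < α + β)
    (ht : t ∈ Icc a b) (hτ : τ ∈ Icc a b) :
    G a b α β ψ τ t = ((ψ t - ψ a) / (ψ b - ψ a)) ^ β * rlKernel ψ (α + β) b τ
      - rlKernel ψ (α + β) t τ := by
  have hab : a ≤ b := ht.1.trans ht.2
  have ha := left_mem_Icc.2 hab
  have hb := right_mem_Icc.2 hab
  rw [Real.div_rpow (sub_nonneg.2 (hψ ha ht ht.1)) (sub_nonneg.2 (hψ ha hb hab)),
    rlKernel_of_ge (hψ hτ hb hτ.2), div_mul_div_comm, mul_comm (_ ^ β) (Real.Gamma _), G]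
  split_ifs with hτt
  · rw [rlKernel_of_ge (hψ hτ ht hτt)]
  · rw [rlKernel_of_le hαβ (hψ ht hτ (not_le.1 hτt).le), sub_zero]

lemma rpow_div_mem_Icc (hψ : MonotoneOn ψ (Icc a b)) (hβ : 0 ≤ β) (ht : t ∈ Icc a b) :
    ((ψ t - ψ a) / (ψ b - ψ a)) ^ β ∈ Icc 0 1 := by
  have hab : a ≤ b := ht.1.trans ht.2
  have hat : 0 ≤ ψ t - ψ a := sub_nonneg.2 (hψ (left_mem_Icc.2 hab) ht ht.1)
  have htb : ψ t - ψ a ≤ ψ b - ψ a := sub_le_sub_right (hψ ht (right_mem_Icc.2 hab) ht.2) _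
  have hdiv : 0 ≤ (ψ t - ψ a) / (ψ b - ψ a) := div_nonneg hat (hat.trans htb)
  exact ⟨Real.rpow_nonneg hdiv _,
    Real.rpow_le_one hdiv (div_le_one_of_le₀ htb (hat.trans htb)) hβ⟩

lemma abs_G_le (hψ : MonotoneOn ψ (Icc a b)) (hβ : 0 ≤ β) (hαβ : 1 < α + β)
    (ht : t ∈ Icc a b) (hτ : τ ∈ Icc a b) :
    |G a b α β ψ τ t| ≤ (ψ b - ψ a) ^ (α + β - 1) / Real.Gamma (α + β) := by
  have hab : a ≤ b := ht.1.trans ht.2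
  have ha := left_mem_Icc.2 hab
  have hb := right_mem_Icc.2 hab
  have hkernel {s : ℝ} (hs : s ∈ Icc a b) :
      rlKernel ψ (α + β) s τ ∈ Icc 0 ((ψ b - ψ a) ^ (α + β - 1) / Real.Gamma (α + β)) :=
    ⟨rlKernel_nonneg (by linarith), rlKernel_le hαβ.le (sub_nonneg.2 (hψ ha hb hab))
      (sub_le_sub (hψ hs hb hs.2) (hψ ha hτ hτ.1))⟩
  have hweight := rpow_div_mem_Icc hψ hβ ht
  rw [G_eq_mul_rlKernel_sub hψ hαβ ht hτ]
  exact abs_sub_le_of_nonneg_of_le (mul_nonneg hweight.1 (hkernel hb).1)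
    ((mul_le_of_le_one_left (hkernel hb).1 hweight.2).trans (hkernel hb).2)
    (hkernel ht).1 (hkernel ht).2

lemma integral_G_mul {μ : Measure (Icc a b)} (hψ : MonotoneOn ψ (Icc a b)) (hαβ : 1 < α + β)
    {φ : Icc a b → ℝ}
    (hφb : Integrable (fun τ : Icc a b => rlKernel ψ (α + β) b τ * φ τ) μ)
    (hφt : Integrable (fun τ : Icc a b => rlKernel ψ (α + β) t τ * φ τ) μ)
    (ht : t ∈ Icc a b) :
    ∫ τ : Icc a b, G a b α β ψ τ t * φ τ ∂μ =
      ((ψ t - ψ a) / (ψ b - ψ a)) ^ β * ∫ τ : Icc a b, rlKernel ψ (α + β) b τ * φ τ ∂μ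
        - ∫ τ : Icc a b, rlKernel ψ (α + β) t τ * φ τ ∂μ := by
  rw [← integral_const_mul, ← integral_sub (hφb.const_mul _) hφt]
  congr with τ
  rw [G_eq_mul_rlKernel_sub hψ hαβ ht τ.2, sub_mul, mul_assoc]

variable {μ : Measure (Icc a b)} {f : Icc a b → ℝ → ℝ} {h : Icc a b → ℝ}
  {g : C(Icc a b, ℝ) → ℝ} {κ : ℝ}

theorem exists_eq_add_integral_G [Fact (a ≤ b)] (hψ : ContinuousOn ψ (Icc a b))
    (hψ_mono : MonotoneOn ψ (Icc a b)) (hβ : 0 ≤ β) (hαβ : 1 < α + β)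
    (hf : IsDominatedCaratheodory f h μ) (hg : Continuous g) (hκ : 0 ≤ κ) (hκ1 : κ < 1)
    (hgκ : ∀ x, |g x| ≤ κ * ‖x‖) :
    ∃ x : C(Icc a b, ℝ), ∀ t : Icc a b, x t = ((ψ t - ψ a) / (ψ b - ψ a)) ^ β * g x
      + ∫ τ : Icc a b, G a b α β ψ τ t * f τ (x τ) ∂μ := by
  have hψI : Continuous fun t : Icc a b => ψ t := hψ.domRestrict
  let p : C(Icc a b, ℝ) := ⟨fun t => ((ψ t - ψ a) / (ψ b - ψ a)) ^ β,
    ((hψI.sub continuous_const).div_const _).rpow_const fun _ => .inr hβ⟩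
  let k : C(Icc a b, C(Icc a b, ℝ)) := curry ⟨_, continuous_rlKernel hψI hαβ.le⟩
  have hp : ‖p‖ ≤ 1 := (norm_le _ zero_le_one).2 fun t => by
    have hpt := rpow_div_mem_Icc hψ_mono hβ t.2
    exact (Real.norm_of_nonneg hpt.1).trans_le hpt.2
  have hk (t τ : Icc a b) (hτ : ¬ τ < t) : k t τ = 0 :=
    rlKernel_of_le hαβ (hψ_mono t.2 τ.2 (not_lt.1 hτ))
  let V := hammerstein k hf
  obtain ⟨B, hB⟩ := (isCompact_closure_range_hammerstein k hf).isBounded.exists_norm_le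
  have hVB (x) : |V x ⊤| ≤ B :=
    (norm_coe_le_norm (V x) ⊤).trans (hB _ (subset_closure (mem_range_self x)))
  obtain ⟨x, hx⟩ := exists_eq_smul_sub (continuous_hammerstein k hf)
    (isStrictlyCausal_hammerstein hk hf) (isCompact_closure_range_hammerstein k hf) p
    (hg.add ((continuous_eval_const ⊤).comp (continuous_hammerstein k hf))) hκ
    ((mul_le_of_le_one_right hκ hp).trans_lt hκ1)
    (fun x => (abs_add_le _ _).trans (add_le_add (hgκ x) (hVB x)))
  refine ⟨x, fun t => ?_⟩
  have hint (s : Icc a b) :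
      Integrable (fun τ : Icc a b => rlKernel ψ (α + β) s τ * f τ (x τ)) μ :=
    integrable_continuousMap_smul (hf.integrable_superposition x) (k s)
  calc x t = (g x + V x ⊤) * p t - V x t := DFunLike.congr_fun hx t
    _ = p t * g x + (p t * V x ⊤ - V x t) := by ring
    _ = _ := by rw [integral_G_mul hψ_mono hαβ (hint ⊤) (hint t) t.2]; rfl

theorem norm_le_of_eq_add_integral_G [Nonempty (Icc a b)] (hψ : MonotoneOn ψ (Icc a b)) (hβ : 0 ≤ β)
    (hαβ : 1 < α + β) (hf : IsDominatedCaratheodory f h μ) (hκ1 : κ < 1)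
    (hgκ : ∀ x, |g x| ≤ κ * ‖x‖) {M : ℝ}
    (hM : (ψ b - ψ a) ^ (α + β - 1) / Real.Gamma (α + β) * ∫ τ, h τ ∂μ ≤ (1 - κ) * M)
    {x : C(Icc a b, ℝ)} (hx : ∀ t : Icc a b, x t = ((ψ t - ψ a) / (ψ b - ψ a)) ^ β * g x
      + ∫ τ : Icc a b, G a b α β ψ τ t * f τ (x τ) ∂μ) :
    ‖x‖ ≤ M := by
  set K := (ψ b - ψ a) ^ (α + β - 1) / Real.Gamma (α + β)
  have hbound : ‖x‖ ≤ κ * ‖x‖ + K * ∫ τ, h τ ∂μ := (norm_le_of_nonempty x).2 fun t => by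
    have hweight := rpow_div_mem_Icc hψ hβ t.2
    have hint : ‖∫ τ : Icc a b, G a b α β ψ τ t * f τ (x τ) ∂μ‖ ≤ K * ∫ τ, h τ ∂μ := by
      rw [← integral_const_mul]
      refine norm_integral_le_of_norm_le (hf.integrable.const_mul K) ?_
      filter_upwards [hf.norm_le] with τ hτ
      rw [norm_mul]
      exact mul_le_mul (abs_G_le hψ hβ hαβ t.2 τ.2) (hτ _) (norm_nonneg _)
        ((abs_nonneg _).trans (abs_G_le hψ hβ hαβ t.2 τ.2))
    rw [hx t]
    refine norm_add_le_of_le ?_ hint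
    rw [norm_mul, Real.norm_of_nonneg hweight.1]
    exact (mul_le_of_le_one_left (norm_nonneg _) hweight.2).trans (hgκ x)
  refine le_of_mul_le_mul_left ?_ (sub_pos.2 hκ1)
  linarith

end Green

section SupNorm

variable {a b : ℝ}

lemma supNorm_IccExtendCM [Fact (a ≤ b)] (x : C(Icc a b, ℝ)) :
    supNorm a b (IccExtendCM x) = ‖x‖ := by
  simp only [supNorm, norm_eq_iSup_norm, Real.norm_eq_abs, IccExtendCM_of_mem, Subtype.coe_prop]

lemma continuous_comp_IccExtendCM [Fact (a ≤ b)] {𝒢 : (ℝ → ℝ) → ℝ}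
    (h𝒢 : ∀ x : ℝ → ℝ, ContinuousOn x (Icc a b) → ∀ ε > 0, ∃ δ > 0,
      ∀ y : ℝ → ℝ, ContinuousOn y (Icc a b) →
        supNorm a b (fun t => x t - y t) < δ → |𝒢 x - 𝒢 y| < ε) :
    Continuous fun x : C(Icc a b, ℝ) => 𝒢 (IccExtendCM x) := by
  refine Metric.continuous_iff.2 fun x ε hε => ?_
  obtain ⟨δ, hδ, hxδ⟩ := h𝒢 (IccExtendCM x) (by fun_prop) ε hε
  refine ⟨δ, hδ, fun y hy => ?_⟩
  rw [dist_comm, Real.dist_eq]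
  refine hxδ _ (by fun_prop) ?_
  rw [dist_comm, dist_eq_norm, ← supNorm_IccExtendCM] at hy
  exact hy

end SupNorm

lemma isDominatedCaratheodory_mul_projIcc {Y : Type*} [MeasurableSpace Y] {μ : Measure Y}
    {w h : Y → ℝ} {f : Y → ℝ → ℝ} {r R : ℝ} (hrR : r ≤ R) (hw : AEStronglyMeasurable w μ)
    (hw0 : ∀ᵐ τ ∂μ, 0 ≤ w τ) (hf : ∀ u, AEStronglyMeasurable (fun τ => f τ u) μ)
    (hf_cont : ∀ᵐ τ ∂μ, ContinuousOn (f τ) (Icc r R))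
    (hfh : ∀ᵐ τ ∂μ, ∀ u ∈ Icc r R, |f τ u| ≤ h τ) (hh : Integrable (fun τ => w τ * h τ) μ) :
    IsDominatedCaratheodory (fun τ u => w τ * f τ (projIcc r R hrR u)) (fun τ => w τ * h τ) μ where
  aestronglyMeasurable u := hw.mul (hf _)
  continuous := by
    filter_upwards [hf_cont] with τ hτ
    exact continuous_const.mul (hτ.domRestrict.comp continuous_projIcc)
  norm_le := by
    filter_upwards [hw0, hfh] with τ hwτ hτ u
    rw [norm_mul, Real.norm_of_nonneg hwτ]
    exact mul_le_mul_of_nonneg_left (hτ _ (projIcc r R hrR u).2) hwτ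
  integrable := hh

lemma aestronglyMeasurable_of_hasDerivAt {s : Set ℝ} {ν : Measure s} {ψ ψd : ℝ → ℝ}
    (hψ : ∀ t ∈ s, HasDerivAt ψ (ψd t) t) : AEStronglyMeasurable (fun t : s => ψd t) ν :=
  ((measurable_deriv ψ).comp measurable_subtype_coe).aestronglyMeasurable.congr <|
    .of_forall fun t => (hψ t t.2).deriv

section Interval

attribute [local instance] Measure.Subtype.measureSpace

variable {a b : ℝ}

lemma measurePreserving_coe_Icc :
    MeasurePreserving ((↑) : Icc a b → ℝ) volume (volume.restrict (Ioo a b)) := by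
  rw [Measure.restrict_congr_set Ioo_ae_eq_Icc]
  exact measurePreserving_subtype_coe measurableSet_Icc

lemma ae_coe_mem_Ioo : ∀ᵐ t : Icc a b, (t : ℝ) ∈ Ioo a b :=
  measurePreserving_coe_Icc.quasiMeasurePreserving.ae (ae_restrict_mem measurableSet_Ioo)

lemma integrable_coe_Icc_iff (hab : a ≤ b) {g : ℝ → ℝ} :
    Integrable (fun t : Icc a b => g t) ↔ IntervalIntegrable g volume a b := by
  rw [intervalIntegrable_iff_integrableOn_Ioo_of_le hab]
  exact measurePreserving_coe_Icc.integrable_comp_emb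
    (MeasurableEmbedding.subtype_coe measurableSet_Icc)

lemma integral_coe_Icc (hab : a ≤ b) (g : ℝ → ℝ) :
    ∫ t : Icc a b, g t = ∫ t in a..b, g t := by
  rw [intervalIntegral.integral_of_le hab, integral_Ioc_eq_integral_Ioo]
  exact measurePreserving_coe_Icc.integral_comp
    (MeasurableEmbedding.subtype_coe measurableSet_Icc) g

theorem existence_of_mild_solution_general
    {a b α β κ M C : ℝ} (hab : a < b) (hβ : 0 ≤ β) (hαβ : 1 < α + β) {ψ ψd : ℝ → ℝ}
    (hψ : ∀ t ∈ Icc a b, HasDerivAt ψ (ψd t) t) (hψd_pos : ∀ t ∈ Icc a b, 0 < ψd t)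
    {f : ℝ → ℝ → ℝ} {𝒢 : (ℝ → ℝ) → ℝ} {κ₁ : ℝ → ℝ} (hκ0 : 0 ≤ κ) (hκ1 : κ < 1)
    (h𝒢_bound : ∀ x : ℝ → ℝ, ContinuousOn x (Icc a b) → |𝒢 x| ≤ κ * supNorm a b x)
    (h𝒢_cont : ∀ x : ℝ → ℝ, ContinuousOn x (Icc a b) → ∀ ε > 0, ∃ δ > 0,
      ∀ y : ℝ → ℝ, ContinuousOn y (Icc a b) →
        supNorm a b (fun t => x t - y t) < δ → |𝒢 x - 𝒢 y| < ε)
    (hf_meas : ∀ u : ℝ, AEStronglyMeasurable (fun t => f t u) (volume.restrict (Ioo a b)))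
    (hf_cont : ∀ t ∈ Ioo a b, ContinuousOn (f t) (Icc (-M) M))
    (hf_bound : ∀ t ∈ Ioo a b, ∀ u ∈ Icc (-M) M, |f t u| ≤ κ₁ t * C)
    (hκ₁_int : IntervalIntegrable (fun t => ψd t * κ₁ t) volume a b) (hM : 0 ≤ M)
    (hM_ineq : C * ((ψ b - ψ a) ^ (α + β - 1) / Real.Gamma (α + β)) *
      (∫ τ in a..b, ψd τ * κ₁ τ) ≤ (1 - κ) * M) :
    ∃ x : ℝ → ℝ, ContinuousOn x (Icc a b) ∧ supNorm a b x ≤ M ∧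
      ∀ t ∈ Icc a b,
        x t = ((ψ t - ψ a) / (ψ b - ψ a)) ^ β * 𝒢 x +
          ∫ τ in a..b, G a b α β ψ τ t * ψd τ * f τ (x τ) := by
  have : Fact (a ≤ b) := ⟨hab.le⟩
  have hψ_cont : ContinuousOn ψ (Icc a b) := HasDerivAt.continuousOn hψ
  have hψ_mono : MonotoneOn ψ (Icc a b) := monotoneOn_of_hasDerivWithinAt_nonneg
    (convex_Icc a b) hψ_cont (fun t ht => (hψ t (interior_subset ht)).hasDerivWithinAt)
    fun t ht => (hψd_pos t (interior_subset ht)).le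
  have hκ₁C : ∫ τ : Icc a b, ψd τ * κ₁ τ * C = C * ∫ τ in a..b, ψd τ * κ₁ τ := by
    rw [integral_mul_const, integral_coe_Icc hab.le fun τ => ψd τ * κ₁ τ, mul_comm]
  have hF : IsDominatedCaratheodory
      (fun (τ : Icc a b) u => ψd τ * f τ (projIcc (-M) M (neg_le_self hM) u))
      (fun τ => ψd τ * κ₁ τ * C) volume := by
    simp only [mul_assoc _ (κ₁ _)]
    refine isDominatedCaratheodory_mul_projIcc _ (aestronglyMeasurable_of_hasDerivAt hψ)
      (.of_forall fun τ => (hψd_pos τ τ.2).le)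
      (fun u => (hf_meas u).comp_measurePreserving measurePreserving_coe_Icc)
      (ae_coe_mem_Ioo.mono fun τ => hf_cont τ) (ae_coe_mem_Ioo.mono fun τ => hf_bound τ) ?_
    simpa only [mul_assoc] using ((integrable_coe_Icc_iff hab.le).2 hκ₁_int).mul_const C
  have h𝒢κ (x : C(Icc a b, ℝ)) : |𝒢 (IccExtendCM x)| ≤ κ * ‖x‖ := by
    rw [← supNorm_IccExtendCM]
    exact h𝒢_bound _ (by fun_prop)
  obtain ⟨x, hx⟩ := exists_eq_add_integral_G hψ_cont hψ_mono hβ hαβ hF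
    (continuous_comp_IccExtendCM h𝒢_cont) hκ0 hκ1 h𝒢κ
  have hxM : ‖x‖ ≤ M := norm_le_of_eq_add_integral_G hψ_mono hβ hαβ hF hκ1 h𝒢κ
    (by rw [hκ₁C]; linarith) hx
  refine ⟨IccExtendCM x, by fun_prop, (supNorm_IccExtendCM x).trans_le hxM, fun t ht => ?_⟩
  rw [IccExtendCM_of_mem ht, hx ⟨t, ht⟩,
    ← integral_coe_Icc hab.le fun τ => G a b α β ψ τ t * ψd τ * f τ (IccExtendCM x τ)]
  congr with τ
  rw [projIcc_of_mem _ (abs_le.1 ((norm_coe_le_norm x τ).trans hxM)), IccExtendCM_of_mem τ.2,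
    mul_assoc]

end Interval

lemma continuous_of_abs_sub_le {f : ℝ → ℝ} {c : ℝ} {Φ : ℝ → ℝ → ℝ}
    (hΦ : ∀ ε > 0, ∃ δ > 0, ∀ u v : ℝ, |u - v| < δ → |Φ u v| < ε)
    (hf : ∀ u v, |f u - f v| ≤ c * |Φ u v|) : Continuous f := by
  have hΦ_lim (v : ℝ) : Tendsto (fun u => Φ u v) (𝓝 v) (𝓝 0) := by
    refine Metric.tendsto_nhds_nhds.2 fun ε hε => ?_
    obtain ⟨δ, hδ, hΦδ⟩ := hΦ ε hε
    exact ⟨δ, hδ, fun u huv => by simpa [Real.dist_eq] using hΦδ u v huv⟩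
  refine continuous_iff_continuousAt.2 fun v => tendsto_iff_dist_tendsto_zero.2 ?_
  exact squeeze_zero (fun _ => dist_nonneg) (fun u => hf u v)
    (by simpa using (hΦ_lim v).abs.const_mul c)

theorem existence_of_mild_solution
    (a b α β κ M : ℝ) (hab : a < b)
    (hα0 : 0 < α) (hα1 : α ≤ 1) (hβ0 : 0 < β) (hβ1 : β ≤ 1) (hαβ : 1 < α + β)
    (ψ ψd : ℝ → ℝ)
    (hψ : ∀ t ∈ Set.Icc a b, HasDerivAt ψ (ψd t) t)
    (hψd_cont : ContinuousOn ψd (Set.Icc a b))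
    (hψd_pos : ∀ t ∈ Set.Icc a b, 0 < ψd t)
    (f : ℝ → ℝ → ℝ) (𝒢 : (ℝ → ℝ) → ℝ)
    (κ₁ κ₂ : ℝ → ℝ) (Ψ : ℝ → ℝ) (Φ : ℝ → ℝ → ℝ)
    -- (i) 𝒢 is continuous and bounded by κ·‖·‖ with κ ∈ (0,1)
    (hκ0 : 0 < κ) (hκ1 : κ < 1)
    (h𝒢_bound : ∀ x : ℝ → ℝ, ContinuousOn x (Set.Icc a b) →
      |𝒢 x| ≤ κ * supNorm a b x)
    (h𝒢_cont : ∀ x : ℝ → ℝ, ContinuousOn x (Set.Icc a b) → ∀ ε > 0, ∃ δ > 0,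
      ∀ y : ℝ → ℝ, ContinuousOn y (Set.Icc a b) →
        supNorm a b (fun t => x t - y t) < δ → |𝒢 x - 𝒢 y| < ε)
    -- (ii) growth and continuity conditions on f
    (hf_meas : ∀ u : ℝ,
      AEStronglyMeasurable (fun t => f t u) (volume.restrict (Set.Ioo a b)))
    (hκ₁_meas : AEStronglyMeasurable κ₁ (volume.restrict (Set.Ioo a b)))
    (hκ₂_meas : AEStronglyMeasurable κ₂ (volume.restrict (Set.Ioo a b)))
    (hκ₁_nonneg : ∀ t ∈ Set.Ioo a b, 0 ≤ κ₁ t)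
    (hκ₂_nonneg : ∀ t ∈ Set.Ioo a b, 0 ≤ κ₂ t)
    (hκ₁_int : IntervalIntegrable (fun t => ψd t * κ₁ t) volume a b)
    (hκ₂_int : IntervalIntegrable (fun t => ψd t * κ₂ t) volume a b)
    (hΨ_nonneg : ∀ s ∈ Set.Ici (0 : ℝ), 0 ≤ Ψ s)
    (hΨ_mono : MonotoneOn Ψ (Set.Ici (0 : ℝ)))
    (hf_growth : ∀ t ∈ Set.Ioo a b, ∀ u : ℝ, |f t u| ≤ κ₁ t * Ψ |u|)
    (hf_lip : ∀ t ∈ Set.Ioo a b, ∀ u v : ℝ, |f t u - f t v| ≤ κ₂ t * |Φ u v|)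
    (hΦ_cont : Continuous fun p : ℝ × ℝ => Φ p.1 p.2)
    (hΦ_small : ∀ ε > 0, ∃ δ > 0, ∀ u v : ℝ, |u - v| < δ → |Φ u v| < ε)
    -- (iii) the norm condition
    (hM : 0 < M)
    (hM_ineq : Ψ M * ((ψ b - ψ a) ^ (α + β - 1) / Real.Gamma (α + β)) *
        (∫ τ in a..b, ψd τ * κ₁ τ) < (1 - κ) * M) :
    ∃ x : ℝ → ℝ, ContinuousOn x (Set.Icc a b) ∧ supNorm a b x ≤ M ∧
      ∀ t ∈ Set.Icc a b,
        x t = ((ψ t - ψ a) / (ψ b - ψ a)) ^ β * 𝒢 x +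
          ∫ τ in a..b, G a b α β ψ τ t * ψd τ * f τ (x τ) := by
  exact existence_of_mild_solution_general hab hβ0.le hαβ hψ hψd_pos hκ0.le hκ1 h𝒢_bound h𝒢_cont
    hf_meas (fun t ht => (continuous_of_abs_sub_le hΦ_small (hf_lip t ht)).continuousOn)
    (fun t ht u hu => (hf_growth t ht u).trans <| mul_le_mul_of_nonneg_left
      (hΨ_mono (abs_nonneg u) hM.le (abs_le.2 hu)) (hκ₁_nonneg t ht)) hκ₁_int hM.le hM_ineq.le
end

section
/- (Equicontinuity estimate for the solution operator) Under the hypotheses: |𝒢(x)| ≤ κ·‖x‖ for all x ∈ C([a,b],ℝ) with κ ∈ (0,1), |f(t,x)| ≤ κ₁(t)·Ψ(|x|) for all t ∈ (a,b) and x ∈ ℝ with κ₁ measurable, ψ'·κ₁ ∈ L¹(a,b), Ψ: [0,∞) → [0,∞) nondecreasing; for every r > 0, every continuous x: [a,b] → ℝ with ‖x‖ ≤ r such that t ↦ f(t,x(t)) is measurable, and all a ≤ t₁ ≤ t₂ ≤ b, one has |Sx(t₂) − Sx(t₁)| ≤ κ·r·((ψ(t₂)−ψ(t₁))/L)^β +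 (2/Γ(α+β))·(ψ(t₂)−ψ(t₁))^{α+β−1}·Ψ(r)·∫_a^b ψ'(τ)κ₁(τ) dτ. -/
open MeasureTheory Set

/-- The solution operator `S` of the boundary value problem. -/
noncomputable def Sop (a b α β : ℝ) (ψ ψd : ℝ → ℝ) (f : ℝ → ℝ → ℝ)
    (𝒢 : (ℝ → ℝ) → ℝ) (x : ℝ → ℝ) (t : ℝ) : ℝ :=
  ((ψ t - ψ a) / (ψ b - ψ a)) ^ β * 𝒢 x +
    ∫ τ in a..b, G a b α β ψ τ t * ψd τ * f τ (x τ)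

/-!
Put `p = α + β - 1 ∈ (0, 1]` and `L = ψ b - ψ a`. Since `0 ^ p = 0`, the two branches of the
Green function combine into
`Γ(α + β) * G τ t = ((ψ t - ψ a) / L) ^ β * (ψ b - ψ τ) ^ p - (ψ t - ψ τ)₊ ^ p`.
Between `t₁ ≤ t₂` each of the two terms increases by an amount in `[0, (ψ t₂ - ψ t₁) ^ p]`, because
`s ↦ s ^ q` is `q`-Hölder with constant `1` for `q ≤ 1`, and `p ≤ β` while the increments of
`(ψ - ψ a) / L` are at most `1`. As the two increments are subtracted, `Γ(α + β) * G τ ·` itself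
varies by at most `(ψ t₂ - ψ t₁) ^ p`, which even saves the factor `2`.
-/

theorem rpow_sub_rpow_mem_Icc {x y q : ℝ} (hx : 0 ≤ x) (hxy : x ≤ y) (hq0 : 0 ≤ q)
    (hq1 : q ≤ 1) : y ^ q - x ^ q ∈ Icc 0 ((y - x) ^ q) := by
  have hsub := Real.rpow_add_le_add_rpow hx (sub_nonneg.2 hxy) hq0 hq1
  rw [add_sub_cancel] at hsub
  exact ⟨sub_nonneg.2 (Real.rpow_le_rpow hx hxy hq0), by linarith⟩

theorem div_rpow_sub_div_rpow_mem_Icc {u v L q : ℝ} (hu : 0 ≤ u) (huv : u ≤ v) (hL : 0 ≤ L)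
    (hq0 : 0 ≤ q) (hq1 : q ≤ 1) :
    (v / L) ^ q - (u / L) ^ q ∈ Icc 0 (((v - u) / L) ^ q) := by
  rw [sub_div]
  exact rpow_sub_rpow_mem_Icc (div_nonneg hu hL) (div_le_div_of_nonneg_right huv hL) hq0 hq1

theorem div_rpow_sub_div_rpow_mul_rpow_mem_Icc {u v L s p q : ℝ} (hL : 0 < L)
    (hu : 0 ≤ u) (huv : u ≤ v) (hvL : v ≤ L) (hs : s ∈ Icc 0 L)
    (hp : 0 ≤ p) (hpq : p ≤ q) (hq : q ≤ 1) :
    ((v / L) ^ q - (u / L) ^ q) * s ^ p ∈ Icc 0 ((v - u) ^ p) := by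
  obtain ⟨hnonneg, hle⟩ := div_rpow_sub_div_rpow_mem_Icc hu huv hL.le (hp.trans hpq) hq
  have hd : 0 ≤ v - u := sub_nonneg.2 huv
  have hsp : 0 ≤ s ^ p := Real.rpow_nonneg hs.1 p
  refine ⟨mul_nonneg hnonneg hsp, ?_⟩
  calc ((v / L) ^ q - (u / L) ^ q) * s ^ p
      ≤ ((v - u) / L) ^ q * s ^ p := by gcongr
    _ ≤ ((v - u) / L) ^ p * s ^ p := by
        gcongr ?_ * _
        exact Real.rpow_le_rpow_of_exponent_ge' (div_nonneg hd hL.le)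
          ((div_le_one hL).2 (by linarith)) hp hpq
    _ ≤ ((v - u) / L) ^ p * L ^ p := by
        gcongr
        exacts [hs.1, hs.2]
    _ = (v - u) ^ p := by
        rw [← Real.mul_rpow (div_nonneg hd hL.le) hL.le, div_mul_cancel₀ _ hL.ne']

theorem max_zero_rpow_sub_max_zero_rpow_mem_Icc {u v p : ℝ} (huv : u ≤ v) (hp0 : 0 ≤ p)
    (hp1 : p ≤ 1) : max v 0 ^ p - max u 0 ^ p ∈ Icc 0 ((v - u) ^ p) := by
  have hmax : max u 0 ≤ max v 0 := max_le_max_right 0 huv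
  obtain ⟨hnonneg, hle⟩ := rpow_sub_rpow_mem_Icc (le_max_right u 0) hmax hp0 hp1
  have hlip : max v 0 - max u 0 ≤ v - u := by
    simpa only [abs_of_nonneg (sub_nonneg.2 hmax), abs_of_nonneg (sub_nonneg.2 huv)]
      using abs_max_sub_max_le_abs v u 0
  exact ⟨hnonneg, hle.trans (Real.rpow_le_rpow (sub_nonneg.2 hmax) hlip hp0)⟩

theorem G_eq_sub_max_rpow {a b α β : ℝ} {ψ : ℝ → ℝ} (hψ : MonotoneOn ψ (Icc a b))
    (hαβ : α + β ≠ 1) {τ t : ℝ} (hτ : τ ∈ Icc a b) (ht : t ∈ Icc a b) :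
    G a b α β ψ τ t =
      (((ψ t - ψ a) / (ψ b - ψ a)) ^ β * (ψ b - ψ τ) ^ (α + β - 1) -
        max (ψ t - ψ τ) 0 ^ (α + β - 1)) / Real.Gamma (α + β) := by
  have hab : a ≤ b := ht.1.trans ht.2
  have ha : a ∈ Icc a b := left_mem_Icc.2 hab
  have hb : b ∈ Icc a b := right_mem_Icc.2 hab
  rw [G, Real.div_rpow (sub_nonneg.2 (hψ ha ht ht.1)) (sub_nonneg.2 (hψ ha hb hab))]
  split_ifs with hτt
  · rw [max_eq_left (sub_nonneg.2 (hψ hτ ht hτt))]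
    ring
  · rw [max_eq_right (sub_nonpos.2 (hψ ht hτ (not_le.1 hτt).le)),
      Real.zero_rpow (sub_ne_zero.2 hαβ)]
    ring

theorem continuousOn_G {a b α β : ℝ} {ψ : ℝ → ℝ} (hψ_cont : ContinuousOn ψ (Icc a b))
    (hψ_mono : MonotoneOn ψ (Icc a b)) (hαβ : 1 < α + β) {t : ℝ} (ht : t ∈ Icc a b) :
    ContinuousOn (fun τ => G a b α β ψ τ t) (Icc a b) := by
  have hp : 0 ≤ α + β - 1 := by linarith
  refine ContinuousOn.congr ?_ fun τ hτ => G_eq_sub_max_rpow hψ_mono hαβ.ne' hτ ht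
  have hleft : ContinuousOn (fun τ => (ψ b - ψ τ) ^ (α + β - 1)) (Icc a b) :=
    (continuousOn_const.sub hψ_cont).rpow_const fun _ _ => Or.inr hp
  have hright : ContinuousOn (fun τ => max (ψ t - ψ τ) 0 ^ (α + β - 1)) (Icc a b) :=
    ((continuousOn_const.sub hψ_cont).sup continuousOn_const).rpow_const fun _ _ => Or.inr hp
  exact ((continuousOn_const.mul hleft).sub hright).div_const _

theorem abs_G_sub_le {a b α β : ℝ} {ψ : ℝ → ℝ} (hψ : MonotoneOn ψ (Icc a b))
    (hψ_lt : ψ a < ψ b) (hα1 : α ≤ 1) (hβ1 : β ≤ 1) (hαβ : 1 < α + β) {τ t₁ t₂ : ℝ}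
    (hτ : τ ∈ Icc a b) (ht₁ : t₁ ∈ Icc a b) (ht₂ : t₂ ∈ Icc a b) (ht : t₁ ≤ t₂) :
    |G a b α β ψ τ t₂ - G a b α β ψ τ t₁| ≤
      (ψ t₂ - ψ t₁) ^ (α + β - 1) / Real.Gamma (α + β) := by
  have hab : a ≤ b := ht₁.1.trans ht₁.2
  have ha : a ∈ Icc a b := left_mem_Icc.2 hab
  have hb : b ∈ Icc a b := right_mem_Icc.2 hab
  have hΓ : 0 < Real.Gamma (α + β) := Real.Gamma_pos_of_pos (by linarith)
  have hψt : ψ t₁ ≤ ψ t₂ := hψ ht₁ ht₂ ht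
  have hboundary := div_rpow_sub_div_rpow_mul_rpow_mem_Icc (p := α + β - 1) (q := β)
    (sub_pos.2 hψ_lt) (sub_nonneg.2 (hψ ha ht₁ ht₁.1)) (sub_le_sub_right hψt (ψ a))
    (sub_le_sub_right (hψ ht₂ hb ht₂.2) (ψ a))
    ⟨sub_nonneg.2 (hψ hτ hb hτ.2), sub_le_sub_left (hψ ha hτ hτ.1) (ψ b)⟩
    (by linarith) (by linarith) hβ1
  have hmemory := max_zero_rpow_sub_max_zero_rpow_mem_Icc (p := α + β - 1)
    (sub_le_sub_right hψt (ψ τ)) (by linarith) (by linarith)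
  rw [sub_sub_sub_cancel_right] at hboundary hmemory
  rw [G_eq_sub_max_rpow hψ hαβ.ne' hτ ht₁, G_eq_sub_max_rpow hψ hαβ.ne' hτ ht₂, ← sub_div,
    abs_div, abs_of_pos hΓ, sub_sub_sub_comm, ← sub_mul]
  gcongr
  exact abs_sub_le_of_nonneg_of_le hboundary.1 hboundary.2 hmemory.1 hmemory.2

theorem abs_integral_mul_sub_integral_mul_le {a b M : ℝ} {g₁ g₂ h : ℝ → ℝ} (hab : a ≤ b)
    (hg₁ : ContinuousOn g₁ (Icc a b)) (hg₂ : ContinuousOn g₂ (Icc a b))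
    (hh : IntervalIntegrable h volume a b) (hM : ∀ τ ∈ Icc a b, |g₂ τ - g₁ τ| ≤ M) :
    |(∫ τ in a..b, g₂ τ * h τ) - ∫ τ in a..b, g₁ τ * h τ| ≤ M * ∫ τ in a..b, |h τ| := by
  rw [← uIcc_of_le hab] at hg₁ hg₂
  have hdiff : IntervalIntegrable (fun τ => (g₂ τ - g₁ τ) * h τ) volume a b :=
    hh.continuousOn_mul (hg₂.sub hg₁)
  calc |(∫ τ in a..b, g₂ τ * h τ) - ∫ τ in a..b, g₁ τ * h τ|
      = |∫ τ in a..b, (g₂ τ - g₁ τ) * h τ| := by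
        simp only [sub_mul]
        rw [intervalIntegral.integral_sub (hh.continuousOn_mul hg₂) (hh.continuousOn_mul hg₁)]
    _ ≤ ∫ τ in a..b, |(g₂ τ - g₁ τ) * h τ| :=
        intervalIntegral.abs_integral_le_integral_abs hab
    _ ≤ ∫ τ in a..b, M * |h τ| := by
        refine intervalIntegral.integral_mono_on hab hdiff.abs (hh.abs.const_mul M) fun τ hτ => ?_
        rw [abs_mul]
        exact mul_le_mul_of_nonneg_right (hM τ hτ) (abs_nonneg _)
    _ = M * ∫ τ in a..b, |h τ| := intervalIntegral.integral_const_mul M _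

theorem abs_Sop_sub_le {a b α β : ℝ} {ψ ψd : ℝ → ℝ} {f : ℝ → ℝ → ℝ} {𝒢 : (ℝ → ℝ) → ℝ}
    {x : ℝ → ℝ} (hψ_cont : ContinuousOn ψ (Icc a b)) (hψ_mono : MonotoneOn ψ (Icc a b))
    (hψ_lt : ψ a < ψ b) (hα1 : α ≤ 1) (hβ1 : β ≤ 1) (hαβ : 1 < α + β)
    (hint : IntervalIntegrable (fun τ => ψd τ * f τ (x τ)) volume a b) {t₁ t₂ : ℝ}
    (ht₁ : t₁ ∈ Icc a b) (ht₂ : t₂ ∈ Icc a b) (ht : t₁ ≤ t₂) :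
    |Sop a b α β ψ ψd f 𝒢 x t₂ - Sop a b α β ψ ψd f 𝒢 x t₁| ≤
      |𝒢 x| * ((ψ t₂ - ψ t₁) / (ψ b - ψ a)) ^ β +
        (ψ t₂ - ψ t₁) ^ (α + β - 1) / Real.Gamma (α + β) *
          ∫ τ in a..b, |ψd τ * f τ (x τ)| := by
  have hab : a ≤ b := ht₁.1.trans ht₁.2
  obtain ⟨hnonneg, hle⟩ := div_rpow_sub_div_rpow_mem_Icc (q := β)
    (sub_nonneg.2 (hψ_mono (left_mem_Icc.2 hab) ht₁ ht₁.1))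
    (sub_le_sub_right (hψ_mono ht₁ ht₂ ht) (ψ a)) (sub_pos.2 hψ_lt).le (by linarith) hβ1
  rw [sub_sub_sub_cancel_right] at hle
  simp only [Sop, mul_assoc (G _ _ _ _ _ _ _)]
  rw [add_sub_add_comm, ← sub_mul]
  refine (abs_add_le _ _).trans (add_le_add ?_ ?_)
  · rw [abs_mul, abs_of_nonneg hnonneg, mul_comm]
    exact mul_le_mul_of_nonneg_left hle (abs_nonneg _)
  · exact abs_integral_mul_sub_integral_mul_le hab (continuousOn_G hψ_cont hψ_mono hαβ ht₁)
      (continuousOn_G hψ_cont hψ_mono hαβ ht₂) hint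
      fun τ hτ => abs_G_sub_le hψ_mono hψ_lt hα1 hβ1 hαβ hτ ht₁ ht₂ ht

theorem abs_le_supNorm {a b : ℝ} {x : ℝ → ℝ} (hx : ContinuousOn x (Icc a b)) {t : ℝ}
    (ht : t ∈ Icc a b) : |x t| ≤ supNorm a b x := by
  have hbdd : BddAbove (range fun s : Icc a b => |x s|) := by
    rw [← image_eq_range (fun s => |x s|)]
    exact isCompact_Icc.bddAbove_image hx.abs
  exact le_ciSup hbdd ⟨t, ht⟩

theorem aestronglyMeasurable_of_hasDerivAt_s13 {F : Type*} [NormedAddCommGroup F] [NormedSpace ℝ F]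
    [CompleteSpace F] {g g' : ℝ → F} {s : Set ℝ} {μ : Measure ℝ}
    (hs : MeasurableSet s) (hg : ∀ t ∈ s, HasDerivAt g (g' t) t) :
    AEStronglyMeasurable g' (μ.restrict s) :=
  (aestronglyMeasurable_deriv g _).congr <|
    (ae_restrict_mem hs).mono fun t ht => (hg t ht).deriv

theorem intervalIntegrable_of_abs_le {a b : ℝ} {g h : ℝ → ℝ} (hab : a ≤ b)
    (hh : AEStronglyMeasurable h (volume.restrict (Ioo a b)))
    (hg : IntervalIntegrable g volume a b) (hle : ∀ t ∈ Ioo a b, |h t| ≤ g t) :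
    IntervalIntegrable h volume a b := by
  rw [intervalIntegrable_iff_integrableOn_Ioo_of_le hab] at hg ⊢
  exact Integrable.mono' hg hh ((ae_restrict_mem measurableSet_Ioo).mono hle)

theorem integral_nonneg_of_nonneg_on_Ioo {a b : ℝ} {g : ℝ → ℝ} (hab : a ≤ b)
    (hg : ∀ t ∈ Ioo a b, 0 ≤ g t) : 0 ≤ ∫ t in a..b, g t := by
  rw [intervalIntegral.integral_of_le hab, integral_Ioc_eq_integral_Ioo]
  exact setIntegral_nonneg measurableSet_Ioo hg

theorem strictMonoOn_Icc_of_hasDerivAt_pos {a b : ℝ} {ψ ψd : ℝ → ℝ}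
    (hψ : ∀ t ∈ Icc a b, HasDerivAt ψ (ψd t) t) (hψd : ∀ t ∈ Icc a b, 0 < ψd t) :
    StrictMonoOn ψ (Icc a b) :=
  strictMonoOn_of_hasDerivWithinAt_pos (convex_Icc a b) (HasDerivAt.continuousOn hψ)
    (fun t ht => (hψ t (interior_subset ht)).hasDerivWithinAt)
    fun t ht => hψd t (interior_subset ht)

theorem abs_mul_le_of_growth {w k u r y : ℝ} {Ψ : ℝ → ℝ} (hΨ : MonotoneOn Ψ (Ici 0))
    (hw : 0 ≤ w) (hk : 0 ≤ k) (hur : |u| ≤ r) (hy : |y| ≤ k * Ψ |u|) :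
    |w * y| ≤ Ψ r * (w * k) := by
  have hΨr : Ψ |u| ≤ Ψ r := hΨ (abs_nonneg u) ((abs_nonneg u).trans hur) hur
  calc |w * y| = w * |y| := by rw [abs_mul, abs_of_nonneg hw]
    _ ≤ w * (k * Ψ r) := by gcongr; exact hy.trans (by gcongr)
    _ = Ψ r * (w * k) := by ring

theorem solution_operator_equicontinuity_general {a b α β κ : ℝ}
    (hα1 : α ≤ 1) (hβ1 : β ≤ 1) (hαβ : 1 < α + β) {ψ ψd : ℝ → ℝ}
    (hψ_cont : ContinuousOn ψ (Icc a b)) (hψ : ∀ t ∈ Ioo a b, HasDerivAt ψ (ψd t) t)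
    (hψd_nonneg : ∀ t ∈ Ioo a b, 0 ≤ ψd t) (hψ_lt : ψ a < ψ b)
    {f : ℝ → ℝ → ℝ} {𝒢 : (ℝ → ℝ) → ℝ} {κ₁ Ψ : ℝ → ℝ} (hκ : 0 ≤ κ)
    (h𝒢_bound : ∀ x : ℝ → ℝ, ContinuousOn x (Icc a b) → |𝒢 x| ≤ κ * supNorm a b x)
    (hκ₁_nonneg : ∀ t ∈ Ioo a b, 0 ≤ κ₁ t)
    (hκ₁_int : IntervalIntegrable (fun t => ψd t * κ₁ t) volume a b)
    (hΨ_mono : MonotoneOn Ψ (Ici 0))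
    (hf_growth : ∀ t ∈ Ioo a b, ∀ u : ℝ, |f t u| ≤ κ₁ t * Ψ |u|)
    {r : ℝ} {x : ℝ → ℝ} (hx : ContinuousOn x (Icc a b)) (hxr : supNorm a b x ≤ r)
    (hfx : AEStronglyMeasurable (fun t => f t (x t)) (volume.restrict (Ioo a b)))
    {t₁ t₂ : ℝ} (ht₁ : t₁ ∈ Icc a b) (ht₂ : t₂ ∈ Icc a b) (ht : t₁ ≤ t₂) :
    |Sop a b α β ψ ψd f 𝒢 x t₂ - Sop a b α β ψ ψd f 𝒢 x t₁| ≤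
      κ * r * ((ψ t₂ - ψ t₁) / (ψ b - ψ a)) ^ β +
        1 / Real.Gamma (α + β) * (ψ t₂ - ψ t₁) ^ (α + β - 1) * Ψ r *
          ∫ τ in a..b, ψd τ * κ₁ τ := by
  have hab : a ≤ b := ht₁.1.trans ht₁.2
  have hψ_mono : MonotoneOn ψ (Icc a b) :=
    monotoneOn_of_hasDerivWithinAt_nonneg (convex_Icc a b) hψ_cont
      (fun t ht => (hψ t (by rwa [interior_Icc] at ht)).hasDerivWithinAt)
      fun t ht => hψd_nonneg t (by rwa [interior_Icc] at ht)
  have hψt : 0 ≤ ψ t₂ - ψ t₁ := sub_nonneg.2 (hψ_mono ht₁ ht₂ ht)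
  have hL : 0 < ψ b - ψ a := sub_pos.2 hψ_lt
  have hΓ : 0 < Real.Gamma (α + β) := Real.Gamma_pos_of_pos (by linarith)
  have hdom : ∀ τ ∈ Ioo a b, |ψd τ * f τ (x τ)| ≤ Ψ r * (ψd τ * κ₁ τ) := fun τ hτ =>
    abs_mul_le_of_growth hΨ_mono (hψd_nonneg τ hτ) (hκ₁_nonneg τ hτ)
      ((abs_le_supNorm hx (Ioo_subset_Icc_self hτ)).trans hxr) (hf_growth τ hτ (x τ))
  have hdom_int := hκ₁_int.const_mul (Ψ r)
  have hint : IntervalIntegrable (fun τ => ψd τ * f τ (x τ)) volume a b :=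
    intervalIntegrable_of_abs_le hab
      ((aestronglyMeasurable_of_hasDerivAt_s13 measurableSet_Ioo hψ).mul hfx) hdom_int hdom
  have h𝒢 : |𝒢 x| ≤ κ * r := (h𝒢_bound x hx).trans (mul_le_mul_of_nonneg_left hxr hκ)
  have hintegral : ∫ τ in a..b, |ψd τ * f τ (x τ)| ≤ Ψ r * ∫ τ in a..b, ψd τ * κ₁ τ := by
    rw [← intervalIntegral.integral_const_mul]
    exact intervalIntegral.integral_mono_on_of_le_Ioo hab hint.abs hdom_int hdom
  refine (abs_Sop_sub_le hψ_cont hψ_mono hψ_lt hα1 hβ1 hαβ hint ht₁ ht₂ ht).trans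
    (add_le_add ?_ ?_)
  · exact mul_le_mul_of_nonneg_right h𝒢 (Real.rpow_nonneg (div_nonneg hψt hL.le) β)
  · rw [one_div_mul_eq_div, mul_assoc (_ / _)]
    exact mul_le_mul_of_nonneg_left hintegral (div_nonneg (Real.rpow_nonneg hψt _) hΓ.le)

theorem solution_operator_equicontinuity
    (a b α β κ : ℝ) (hab : a < b)
    (hα0 : 0 < α) (hα1 : α ≤ 1) (hβ0 : 0 < β) (hβ1 : β ≤ 1) (hαβ : 1 < α + β)
    (ψ ψd : ℝ → ℝ)
    (hψ : ∀ t ∈ Set.Icc a b, HasDerivAt ψ (ψd t) t)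
    (hψd_cont : ContinuousOn ψd (Set.Icc a b))
    (hψd_pos : ∀ t ∈ Set.Icc a b, 0 < ψd t)
    (f : ℝ → ℝ → ℝ) (𝒢 : (ℝ → ℝ) → ℝ) (κ₁ Ψ : ℝ → ℝ)
    (hκ0 : 0 < κ) (hκ1 : κ < 1)
    (h𝒢_bound : ∀ x : ℝ → ℝ, ContinuousOn x (Set.Icc a b) →
      |𝒢 x| ≤ κ * supNorm a b x)
    (hf_meas : ∀ u : ℝ,
      AEStronglyMeasurable (fun t => f t u) (volume.restrict (Set.Ioo a b)))
    (hκ₁_meas : AEStronglyMeasurable κ₁ (volume.restrict (Set.Ioo a b)))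
    (hκ₁_nonneg : ∀ t ∈ Set.Ioo a b, 0 ≤ κ₁ t)
    (hκ₁_int : IntervalIntegrable (fun t => ψd t * κ₁ t) volume a b)
    (hΨ_nonneg : ∀ s ∈ Set.Ici (0 : ℝ), 0 ≤ Ψ s)
    (hΨ_mono : MonotoneOn Ψ (Set.Ici (0 : ℝ)))
    (hf_growth : ∀ t ∈ Set.Ioo a b, ∀ u : ℝ, |f t u| ≤ κ₁ t * Ψ |u|) :
    ∀ r > (0 : ℝ), ∀ x : ℝ → ℝ, ContinuousOn x (Set.Icc a b) →
      supNorm a b x ≤ r →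
      AEStronglyMeasurable (fun t => f t (x t)) (volume.restrict (Set.Ioo a b)) →
      ∀ t₁ t₂, a ≤ t₁ → t₁ ≤ t₂ → t₂ ≤ b →
        |Sop a b α β ψ ψd f 𝒢 x t₂ - Sop a b α β ψ ψd f 𝒢 x t₁| ≤
          κ * r * ((ψ t₂ - ψ t₁) / (ψ b - ψ a)) ^ β +
            2 / Real.Gamma (α + β) * (ψ t₂ - ψ t₁) ^ (α + β - 1) * Ψ r *
              ∫ τ in a..b, ψd τ * κ₁ τ := by
  intro r hr x hx hxr hfx t₁ t₂ hat₁ ht ht₂b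
  have ht₁ : t₁ ∈ Icc a b := ⟨hat₁, ht.trans ht₂b⟩
  have ht₂ : t₂ ∈ Icc a b := ⟨hat₁.trans ht, ht₂b⟩
  have hψ_mono : StrictMonoOn ψ (Icc a b) := strictMonoOn_Icc_of_hasDerivAt_pos hψ hψd_pos
  have hψ_lt : ψ a < ψ b := hψ_mono (left_mem_Icc.2 hab.le) (right_mem_Icc.2 hab.le) hab
  have hψt : 0 ≤ ψ t₂ - ψ t₁ := sub_nonneg.2 (hψ_mono.monotoneOn ht₁ ht₂ ht)
  have hψd_nonneg : ∀ t ∈ Ioo a b, 0 ≤ ψd t := fun t ht => (hψd_pos t (Ioo_subset_Icc_self ht)).le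
  have hintegral : 0 ≤ ∫ τ in a..b, ψd τ * κ₁ τ :=
    integral_nonneg_of_nonneg_on_Ioo hab.le fun τ hτ =>
      mul_nonneg (hψd_nonneg τ hτ) (hκ₁_nonneg τ hτ)
  refine (solution_operator_equicontinuity_general hα1 hβ1 hαβ
    (HasDerivAt.continuousOn hψ) (fun t ht => hψ t (Ioo_subset_Icc_self ht)) hψd_nonneg hψ_lt
    hκ0.le h𝒢_bound hκ₁_nonneg hκ₁_int hΨ_mono hf_growth hx hxr hfx ht₁ ht₂ ht).trans ?_
  gcongr
  · exact hΨ_nonneg r hr.le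
  · exact one_le_two
end
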